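/- arXiv:0706.1092 — 5 statements merged into one kernel-verified Lean document; each statement's English description precedes it below -/
import Mathlib

section
/- Let P be a polytope in ℝ^k whose vertices lie in ℕ₀^k, and let χ : ℕ₀^k → X be an additive coloring. Then there exist a constant N and a polynomial p such that for all integers n ≥ N, the number of colors |χ(nP ∩ ℤ^k)| appearing on the lattice points of the dilation nP equals p(n). -/
open Pointwise

def EvPoly (f : ℕ → ℝ) : Prop :=
  ∃ (N : ℕ) (p : Polynomial ℝ), ∀ n : ℕ, N ≤ n → f n = p.eval (n : ℝ)

lemma EvPoly.congr {f g : ℕ → ℝ} (hf : EvPoly f) (N : ℕ) (h : ∀ n, N ≤ n → g n = f n) :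
    EvPoly g := by
  obtain ⟨M, p, hp⟩ := hf
  refine ⟨max N M, p, fun n hn => ?_⟩
  rw [h n (le_trans (le_max_left _ _) hn), hp n (le_trans (le_max_right _ _) hn)]

lemma EvPoly.add {f g : ℕ → ℝ} (hf : EvPoly f) (hg : EvPoly g) :
    EvPoly (fun n => f n + g n) := by
  obtain ⟨M, p, hp⟩ := hf
  obtain ⟨M', p', hp'⟩ := hg
  refine ⟨max M M', p + p', fun n hn => ?_⟩
  simp [hp n (le_trans (le_max_left _ _) hn), hp' n (le_trans (le_max_right _ _) hn)]

lemma EvPoly.const (c : ℝ) : EvPoly (fun _ => c) := ⟨0, Polynomial.C c, by simp⟩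

lemma EvPoly.sum {ι : Type*} (s : Finset ι) (f : ι → ℕ → ℝ) (h : ∀ i ∈ s, EvPoly (f i)) :
    EvPoly (fun n => ∑ i ∈ s, f i n) := by
  classical
  induction s using Finset.induction_on with
  | empty => simpa using EvPoly.const 0
  | insert a s ha ih =>
    simp only [Finset.sum_insert ha]
    exact (h a (by simp)).add (ih fun i hi => h i (by simp [hi]))

lemma EvPoly.shift {f : ℕ → ℝ} (hf : EvPoly f) (d : ℕ) : EvPoly (fun n => f (n - d)) := by
  obtain ⟨M, p, hp⟩ := hf
  refine ⟨M + d, p.comp (Polynomial.X - Polynomial.C (d : ℝ)), fun n hn => ?_⟩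
  beta_reduce
  rw [hp (n - d) (by omega), Nat.cast_sub (by omega)]
  simp

lemma EvPoly.shift_add {f : ℕ → ℝ} (hf : EvPoly f) (d : ℕ) : EvPoly (fun n => f (n + d)) := by
  obtain ⟨M, p, hp⟩ := hf
  refine ⟨M, p.comp (Polynomial.X + Polynomial.C (d : ℝ)), fun n hn => ?_⟩
  beta_reduce
  rw [hp (n + d) (by omega)]
  simp

lemma exists_sum_poly (p : Polynomial ℝ) :
    ∃ q : Polynomial ℝ, ∀ n : ℕ, ∑ i ∈ Finset.range n, p.eval (i : ℝ) = q.eval (n : ℝ) := by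
  induction p using Polynomial.induction_on' with
  | add p q hp hq =>
    obtain ⟨a, ha⟩ := hp
    obtain ⟨b, hb⟩ := hq
    exact ⟨a + b, fun n => by simp [Finset.sum_add_distrib, ha, hb]⟩
  | monomial m c =>
    refine ⟨∑ i ∈ Finset.range (m + 1), Polynomial.C (c * ((bernoulli i : ℝ) *
      ((m + 1).choose i : ℝ) / ((m : ℝ) + 1))) * Polynomial.X ^ (m + 1 - i), fun n => ?_⟩
    have h := congrArg (fun x : ℚ => c * (x : ℝ)) (sum_range_pow n m)
    simp only [Polynomial.eval_monomial, ← Finset.mul_sum]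
    push_cast at h
    rw [h, Polynomial.eval_finsetSum, Finset.mul_sum]
    refine Finset.sum_congr rfl fun i _ => ?_
    simp
    ring

lemma EvPoly.sum_range {f : ℕ → ℝ} (hf : EvPoly f) :
    EvPoly (fun n => ∑ i ∈ Finset.range n, f i) := by
  obtain ⟨M, p, hp⟩ := hf
  obtain ⟨q, hq⟩ := exists_sum_poly p
  refine ⟨M, q + Polynomial.C (∑ i ∈ Finset.range M, (f i - p.eval (i : ℝ))), fun n hn => ?_⟩
  obtain ⟨t, rfl⟩ := Nat.exists_eq_add_of_le hn
  beta_reduce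
  rw [Polynomial.eval_add, Polynomial.eval_C, ← hq, Finset.sum_range_add, Finset.sum_range_add,
    Finset.sum_sub_distrib, Finset.sum_congr rfl fun x _ => hp (M + x) (by omega)]
  ring

open Classical in
noncomputable def cnt {r : ℕ} (L : Set (Fin r → ℕ)) (n : ℕ) : ℕ :=
  ((Finset.Nat.antidiagonalTuple r n).filter (· ∈ L)).card

lemma cnt_succ {r : ℕ} (L : Set (Fin (r + 1) → ℕ)) (n : ℕ) :
    cnt L n = ∑ j ∈ Finset.range (n + 1), cnt {x : Fin r → ℕ | Fin.cons j x ∈ L} (n - j) := by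
  classical
  unfold cnt
  rw [Finset.card_eq_sum_card_fiberwise (f := fun m => m 0) (t := Finset.range (n + 1))]
  · refine Finset.sum_congr rfl fun j hj => ?_
    simp only [Finset.mem_range] at hj
    refine Finset.card_nbij' (fun m => Fin.tail m) (fun x => Fin.cons j x) ?_ ?_ ?_ ?_
    · intro m hm
      simp [Finset.Nat.mem_antidiagonalTuple, Fin.sum_univ_succ] at hm ⊢
      obtain ⟨⟨h1, h2⟩, rfl⟩ := hm
      refine ⟨?_, by rwa [Fin.cons_self_tail]⟩
      simp only [Fin.tail]
      omega
    · intro x hx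
      simp [Finset.Nat.mem_antidiagonalTuple, Fin.sum_univ_succ] at hx ⊢
      exact ⟨by omega, hx.2⟩
    · intro m hm
      simp at hm
      obtain ⟨_, rfl⟩ := hm
      exact Fin.cons_self_tail m
    · intro x hx
      simp
  · intro m hm
    simp [Finset.Nat.mem_antidiagonalTuple, Fin.sum_univ_succ] at hm ⊢
    omega

lemma evPoly_cnt {r : ℕ} (L : Set (Fin r → ℕ)) (hL : IsLowerSet L) :
    EvPoly (fun n => (cnt L n : ℝ)) := by
  induction r with
  | zero =>
    refine (EvPoly.const 0).congr 1 fun n hn => ?_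
    obtain ⟨t, rfl⟩ := Nat.exists_eq_add_of_le' hn
    simp [cnt]
  | succ r ih =>
    have hlow : ∀ j : ℕ, IsLowerSet {x : Fin r → ℕ | (Fin.cons j x : Fin (r+1) → ℕ) ∈ L} := by
      intro j a b hab ha
      exact hL (Fin.cons_le_cons.2 ⟨le_rfl, hab⟩) ha
    obtain ⟨J, hJ⟩ : ∃ J : ℕ, ∀ j, J ≤ j → ∀ x : Fin r → ℕ,
        ((Fin.cons j x : Fin (r+1) → ℕ) ∈ L ↔ (Fin.cons J x : Fin (r+1) → ℕ) ∈ L) := by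
      have hfin : {u | Minimal (· ∈ Lᶜ) u}.Finite :=
        WellQuasiOrderedLE.finite_of_isAntichain (setOfPred_minimal_antichain _)
      obtain ⟨J, hJ⟩ := (hfin.image (fun u => u 0)).bddAbove
      refine ⟨J, fun j hj x => ⟨fun h => hL (Fin.cons_le_cons.2 ⟨hj, le_rfl⟩) h, fun h => ?_⟩⟩
      by_contra hc
      obtain ⟨u, hu, hmin⟩ := exists_minimal_le_of_wellFoundedLT (· ∈ Lᶜ) _ hc
      have h0 : u 0 ≤ J := hJ ⟨u, hmin, rfl⟩
      apply hmin.prop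
      refine hL ?_ h
      intro i
      refine Fin.cases ?_ (fun i => ?_) i
      · simpa using h0
      · simpa using hu i.succ
    have key : EvPoly (fun n => (∑ j ∈ Finset.range J,
        (cnt {x : Fin r → ℕ | (Fin.cons j x : Fin (r+1) → ℕ) ∈ L} (n - j) : ℝ)) +
        ∑ i ∈ Finset.range (n - J + 1),
          (cnt {x : Fin r → ℕ | (Fin.cons J x : Fin (r+1) → ℕ) ∈ L} i : ℝ)) := by
      refine EvPoly.add (EvPoly.sum _ _ fun j _ => (ih _ (hlow j)).shift j) ?_
      exact (((ih _ (hlow J)).sum_range).shift_add 1).shift J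
    refine key.congr J fun n hn => ?_
    obtain ⟨t, rfl⟩ := Nat.exists_eq_add_of_le hn
    rw [cnt_succ, add_assoc, Finset.sum_range_add]
    push_cast
    congr 1
    rw [show J + t - J + 1 = t + 1 by omega, ← Finset.sum_range_reflect]
    refine Finset.sum_congr rfl fun x hx => ?_
    simp only [Finset.mem_range] at hx
    rw [show J + t - (J + (t + 1 - 1 - x)) = x by omega]
    congr 3
    ext y
    exact hJ _ (by omega) y

lemma evPoly_colors {X : Type*} {r s : ℕ} (d : Fin s → ℕ) (c : Fin s → (Fin r → ℕ) → X)
    (hc : ∀ b b' m m' e, c b m = c b' m' → c b (m + e) = c b' (m' + e)) :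
    EvPoly (fun n => (({y | ∃ b m, d b + ∑ i, m i = n ∧ c b m = y} : Set X).ncard : ℝ)) := by
  classical
  let key : Fin s → (Fin r → ℕ) → Lex (Lex (Fin r → ℕ) × Fin s) := fun b m => toLex (toLex m, b)
  let L : Fin s → Set (Fin r → ℕ) := fun b => {m | ∀ b' m', d b' + ∑ i, m' i = d b + ∑ i, m i →
    c b' m' = c b m → key b m ≤ key b' m'}
  have hL : ∀ b, IsLowerSet (L b) := by
    intro b m m0 hle hm b' m' hdeg hcol
    obtain ⟨e, rfl⟩ := exists_add_of_le hle
    have := hm b' (m' + e) (by simp [Finset.sum_add_distrib]; omega) (hc _ _ _ _ _ hcol)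
    simp only [key, Prod.Lex.toLex_le_toLex, toLex_add] at this ⊢
    simpa using this
  have hcount : EvPoly (fun n => ∑ b : Fin s, (cnt (L b) (n - d b) : ℝ)) :=
    EvPoly.sum _ _ fun b _ => (evPoly_cnt _ (hL b)).shift _
  refine hcount.congr (∑ b, d b) fun n hn => ?_
  have hd : ∀ b, d b ≤ n := fun b =>
    (Finset.single_le_sum (f := d) (fun _ _ => Nat.zero_le _) (Finset.mem_univ b)).trans hn
  let T : Finset (Σ _ : Fin s, (Fin r → ℕ)) := Finset.univ.sigma fun b =>
    (Finset.Nat.antidiagonalTuple r (n - d b)).filter (· ∈ L b)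
  have hT : ∀ b m, (⟨b, m⟩ : Σ _ : Fin s, (Fin r → ℕ)) ∈ T ↔ d b + ∑ i, m i = n ∧ m ∈ L b := by
    intro b m
    have := hd b
    simp only [T, Finset.mem_sigma, Finset.mem_univ, true_and, Finset.mem_filter,
      Finset.Nat.mem_antidiagonalTuple]
    refine and_congr_left fun _ => ?_
    omega
  have hcard : T.card = ∑ b : Fin s, cnt (L b) (n - d b) := by
    simp only [T, Finset.card_sigma, cnt]
    refine Finset.sum_congr rfl fun b _ => ?_
    congr
  have himg : ({y | ∃ b m, d b + ∑ i, m i = n ∧ c b m = y} : Set X)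
      = (T.image fun q => c q.1 q.2 : Finset X) := by
    ext y
    simp only [Set.mem_setOf_eq, Finset.coe_image, Set.mem_image, Finset.mem_coe]
    constructor
    · rintro ⟨b, m, hdeg, hy⟩
      obtain ⟨z, ⟨b0, m0, h1, h2, rfl⟩, hmin⟩ := WellFounded.has_min
        (wellFounded_lt (α := Lex (Lex (Fin r → ℕ) × Fin s)))
        {z | ∃ b m, d b + ∑ i, m i = n ∧ c b m = y ∧ key b m = z} ⟨_, b, m, hdeg, hy, rfl⟩
      refine ⟨⟨b0, m0⟩, (hT _ _).2 ⟨h1, fun b' m' hd' hc' => ?_⟩, h2⟩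
      exact not_lt.1 (hmin _ ⟨b', m', hd'.trans h1, hc'.trans h2, rfl⟩)
    · rintro ⟨⟨b, m⟩, hq, rfl⟩
      exact ⟨b, m, ((hT _ _).1 hq).1, rfl⟩
  rw [himg, Set.ncard_coe_finset, Finset.card_image_of_injOn, hcard]
  · push_cast; rfl
  · rintro ⟨b, m⟩ hq ⟨b', m'⟩ hq' h
    obtain ⟨h1, h2⟩ := (hT _ _).1 hq
    obtain ⟨h1', h2'⟩ := (hT _ _).1 hq'
    have e : key b m = key b' m' :=
      le_antisymm (h2 _ _ (h1'.trans h1.symm) h.symm) (h2' _ _ (h1.trans h1'.symm) h)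
    simp only [key, EmbeddingLike.apply_eq_iff_eq, Prod.mk.injEq] at e
    obtain ⟨rfl, rfl⟩ := e
    rfl

/-- lattice points in dilates, through nonnegative coefficients -/
def dil {k r : ℕ} (w : Fin r → Fin k → ℕ) (n : ℕ) : Set (Fin k → ℕ) :=
  {a | ∃ l : Fin r → ℝ, (∀ j, 0 ≤ l j) ∧ ∑ j, l j = n ∧ ∀ i, (a i : ℝ) = ∑ j, l j * w j i}

lemma dil_finite {k r : ℕ} (w : Fin r → Fin k → ℕ) (n : ℕ) : (dil w n).Finite := by
  refine (Set.finite_Iic (fun i => n * ∑ j, w j i : Fin k → ℕ)).subset ?_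
  rintro a ⟨l, h0, h1, h2⟩ i
  have : (a i : ℝ) ≤ n * ∑ j, (w j i : ℝ) := by
    rw [h2, Finset.mul_sum]
    refine Finset.sum_le_sum fun j _ => mul_le_mul_of_nonneg_right ?_ (by positivity)
    rw [← h1]
    exact Finset.single_le_sum (fun j _ => h0 j) (Finset.mem_univ j)
  exact_mod_cast this

lemma dil_add {k r : ℕ} (w : Fin r → Fin k → ℕ) {n : ℕ} {b : Fin k → ℕ} (hb : b ∈ dil w n)
    (m : Fin r → ℕ) : b + ∑ j, m j • w j ∈ dil w (n + ∑ j, m j) := by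
  obtain ⟨l, h0, h1, h2⟩ := hb
  refine ⟨fun j => l j + m j, fun j => by have := h0 j; positivity, ?_, fun i => ?_⟩
  · simp [Finset.sum_add_distrib, h1]
  · simp [Finset.sum_add_distrib, h2, add_mul]

lemma dil_decomp {k r : ℕ} (w : Fin r → Fin k → ℕ) {n : ℕ} {a : Fin k → ℕ} (ha : a ∈ dil w n) :
    ∃ d ≤ r, ∃ b ∈ dil w d, ∃ m : Fin r → ℕ, d + ∑ j, m j = n ∧ a = b + ∑ j, m j • w j := by
  obtain ⟨l, h0, h1, h2⟩ := ha
  have hfl : ∀ j, (⌊l j⌋₊ : ℝ) ≤ l j := fun j => Nat.floor_le (h0 j)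
  have hle : ∑ j, ⌊l j⌋₊ ≤ n := by
    have : ((∑ j, ⌊l j⌋₊ : ℕ) : ℝ) ≤ n := by
      rw [← h1]; push_cast; exact Finset.sum_le_sum fun j _ => hfl j
    exact_mod_cast this
  have hle2 : ∀ i, ∑ j, ⌊l j⌋₊ * w j i ≤ a i := by
    intro i
    have : ((∑ j, ⌊l j⌋₊ * w j i : ℕ) : ℝ) ≤ a i := by
      rw [h2]; push_cast
      exact Finset.sum_le_sum fun j _ => mul_le_mul_of_nonneg_right (hfl j) (by positivity)
    exact_mod_cast this
  refine ⟨n - ∑ j, ⌊l j⌋₊, ?_, fun i => a i - ∑ j, ⌊l j⌋₊ * w j i,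
    ⟨fun j => l j - ⌊l j⌋₊, fun j => sub_nonneg.2 (hfl j), ?_, fun i => ?_⟩,
    fun j => ⌊l j⌋₊, Nat.sub_add_cancel hle, ?_⟩
  · have : (n : ℝ) ≤ ((r + ∑ j, ⌊l j⌋₊ : ℕ) : ℝ) := by
      rw [← h1]; push_cast
      have : ∑ j : Fin r, l j ≤ ∑ j : Fin r, (1 + (⌊l j⌋₊ : ℝ)) :=
        Finset.sum_le_sum fun j _ => by linarith [Nat.lt_floor_add_one (l j)]
      simpa [Finset.sum_add_distrib] using this
    have : n ≤ r + ∑ j, ⌊l j⌋₊ := by exact_mod_cast this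
    omega
  · rw [Nat.cast_sub hle, Finset.sum_sub_distrib, h1]; push_cast; rfl
  · rw [Nat.cast_sub (hle2 i), h2]; push_cast
    simp [sub_mul, Finset.sum_sub_distrib]
  · ext i
    have := hle2 i
    simp
    omega

theorem number_of_colors_in_dilated_lattice_polytope_eventually_polynomial
    {k : ℕ} {X : Type*} (V : Finset (Fin k → ℝ)) (hVne : V.Nonempty)
    (hV : ∀ v ∈ V, ∀ i, ∃ m : ℕ, v i = (m : ℝ))
    (χ : (Fin k → ℕ) → X)
    (hχ : ∀ a b c d : Fin k → ℕ, χ a = χ c → χ b = χ d → χ (a + b) = χ (c + d)) :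
    ∃ (N : ℕ) (p : Polynomial ℝ), ∀ n : ℕ, N ≤ n →
      ((χ '' {a : Fin k → ℕ |
          (fun i => (a i : ℝ)) ∈ (n : ℝ) • convexHull ℝ (V : Set (Fin k → ℝ))}).ncard : ℝ)
        = p.eval (n : ℝ) := by
  classical
  let φ := V.equivFin
  choose w hw using fun j : Fin V.card => hV (φ.symm j) (φ.symm j).2
  have hsum : ∀ {M : Type} [AddCommMonoid M] (f : (Fin k → ℝ) → M),
      ∑ v ∈ V, f v = ∑ j, f (φ.symm j) := by
    intro M _ f
    rw [← Finset.sum_coe_sort V f]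
    exact (Equiv.sum_comp φ.symm (fun v : V => f v)).symm
  have hdil : ∀ n : ℕ, 1 ≤ n → {a : Fin k → ℕ |
      (fun i => (a i : ℝ)) ∈ (n : ℝ) • convexHull ℝ (V : Set (Fin k → ℝ))} = dil w n := by
    intro n hn
    have hn' : (n : ℝ) ≠ 0 := by positivity
    ext a
    simp only [Set.mem_setOf_eq, Set.mem_smul_set, Finset.mem_convexHull', dil]
    constructor
    · rintro ⟨x, ⟨l, h0, h1, h2⟩, h3⟩
      refine ⟨fun j => n * l (φ.symm j), fun j => mul_nonneg (by positivity) (h0 _ (φ.symm j).2),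
        ?_, fun i => ?_⟩
      · rw [← Finset.mul_sum, ← hsum, h1, mul_one]
      · have h4 := congrFun h3 i
        simp only [← h4, ← h2, hsum, Pi.smul_apply, Finset.sum_apply, smul_eq_mul, ← hw,
          Finset.mul_sum, mul_assoc]
    · rintro ⟨l, h0, h1, h2⟩
      refine ⟨fun i => (n : ℝ)⁻¹ * a i,
        ⟨fun v => if h : v ∈ V then (n : ℝ)⁻¹ * l (φ ⟨v, h⟩) else 0, fun v hv => ?_, ?_, ?_⟩, ?_⟩
      · simp only [hv, dite_true]
        exact mul_nonneg (by positivity) (h0 _)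
      · simp [hsum, ← Finset.mul_sum, h1, hn']
      · ext i
        simp [hsum, h2, hw, Finset.mul_sum, mul_assoc]
      · ext i
        simp [hn']
  have hBfin : {q : ℕ × (Fin k → ℕ) | q.1 ≤ V.card ∧ q.2 ∈ dil w q.1}.Finite := by
    refine ((Set.finite_Iic V.card).biUnion
      (t := fun d => (fun b => (d, b)) '' dil w d) fun d _ => (dil_finite w d).image _).subset ?_
    rintro ⟨d, b⟩ ⟨h1, h2⟩
    simp only [Set.mem_iUnion]
    exact ⟨d, h1, b, h2, rfl⟩
  let B := hBfin.toFinset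
  let ψ := B.equivFin
  have hB : ∀ q, q ∈ B ↔ q.1 ≤ V.card ∧ q.2 ∈ dil w q.1 := fun q => by simp [B]
  have main := evPoly_colors (fun t : Fin B.card => (ψ.symm t).1.1)
    (fun t m => χ ((ψ.symm t).1.2 + ∑ j, m j • w j)) (by
      intro b b' m m' e h
      simp only [Pi.add_apply, add_smul, Finset.sum_add_distrib, ← add_assoc]
      exact hχ _ _ _ _ h rfl)
  refine main.congr 1 fun n hn => ?_
  beta_reduce
  rw [hdil n hn]
  congr 2
  ext y
  constructor
  · rintro ⟨a, ha, rfl⟩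
    obtain ⟨d, hd, b, hb, m, hm, rfl⟩ := dil_decomp w ha
    refine ⟨ψ ⟨(d, b), (hB _).2 ⟨hd, hb⟩⟩, m, ?_, ?_⟩ <;> simp [hm]
  · rintro ⟨t, m, hm, rfl⟩
    refine ⟨_, ?_, rfl⟩
    rw [← hm]
    exact dil_add w ((hB _).1 (ψ.symm t).2).2 m
end

section
/- Let X be a set, B ⊂ X a finite subset, 𝓕 a finite family of mutually commuting mappings from X to itself, and P = {P₁,…,P_l} a partition of 𝓕 into nonempty blocks. Then the function (n₁,…,n_l) ↦ |𝓕^{(n₁,…,n_l)}(B)| from ℕ₀^l to ℕ₀ is strongly eventually polynomial. -/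
/-- A function `f : ℕ₀^l → ℝ` is strongly eventually polynomial if there is a constant
`c ∈ ℕ` and, for every word `w ∈ ({0,…,c} ∪ {∞})^l` (encoded as `Fin l → Option ℕ`,
with `none` playing the role of `∞`), a polynomial `p_w ∈ ℝ[x₁,…,x_l]` such that
`f(n) = p_{w(n)}(n)`, where `w(n)_i = n_i` if `n_i ≤ c` and `w(n)_i = ∞` if `n_i > c`. -/
def StronglyEventuallyPolynomial {l : ℕ} (f : (Fin l → ℕ) → ℝ) : Prop :=
  ∃ c : ℕ, 0 < c ∧ ∃ p : (Fin l → Option ℕ) → MvPolynomial (Fin l) ℝ,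
    ∀ n : Fin l → ℕ,
      f n = MvPolynomial.eval (fun i => (n i : ℝ))
        (p fun i => if n i ≤ c then some (n i) else none)

/-- Eventual polynomiality with a prescribed threshold. -/
def SEPAt {l : ℕ} (c : ℕ) (f : (Fin l → ℕ) → ℝ) : Prop :=
  ∃ p : (Fin l → Option ℕ) → MvPolynomial (Fin l) ℝ,
    ∀ n : Fin l → ℕ,
      f n = MvPolynomial.eval (fun i => (n i : ℝ))
        (p fun i => if n i ≤ c then some (n i) else none)

theorem SEPAt.mono {l : ℕ} {c d : ℕ} (h : c ≤ d) {f : (Fin l → ℕ) → ℝ} (hf : SEPAt c f) :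
    SEPAt d f := by
  obtain ⟨p, hp⟩ := hf
  refine ⟨fun w => p fun i => (w i).bind fun k => if k ≤ c then some k else none, fun n => ?_⟩
  rw [hp n]
  congr 2
  funext i
  by_cases h1 : n i ≤ d
  · simp [h1]
  · have h2 : ¬ n i ≤ c := by omega
    simp [h1, h2]

theorem SEP_iff {l : ℕ} {f : (Fin l → ℕ) → ℝ} :
    StronglyEventuallyPolynomial f ↔ ∃ c, SEPAt c f := by
  constructor
  · rintro ⟨c, _, h⟩
    exact ⟨c, h⟩
  · rintro ⟨c, h⟩
    exact ⟨c + 1, by omega, h.mono (by omega)⟩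

theorem SEP_add {l : ℕ} {f g : (Fin l → ℕ) → ℝ} (hf : StronglyEventuallyPolynomial f)
    (hg : StronglyEventuallyPolynomial g) : StronglyEventuallyPolynomial (fun n => f n + g n) := by
  rw [SEP_iff] at *
  obtain ⟨c, hf⟩ := hf
  obtain ⟨d, hg⟩ := hg
  obtain ⟨p, hp⟩ := hf.mono (le_max_left c d)
  obtain ⟨q, hq⟩ := hg.mono (le_max_right c d)
  exact ⟨max c d, fun w => p w + q w, fun n => by simp [hp n, hq n]⟩

theorem SEP_sub {l : ℕ} {f g : (Fin l → ℕ) → ℝ} (hf : StronglyEventuallyPolynomial f)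
    (hg : StronglyEventuallyPolynomial g) : StronglyEventuallyPolynomial (fun n => f n - g n) := by
  rw [SEP_iff] at *
  obtain ⟨c, hf⟩ := hf
  obtain ⟨d, hg⟩ := hg
  obtain ⟨p, hp⟩ := hf.mono (le_max_left c d)
  obtain ⟨q, hq⟩ := hg.mono (le_max_right c d)
  exact ⟨max c d, fun w => p w - q w, fun n => by simp [hp n, hq n]⟩

theorem SEP_sum {l : ℕ} {β : Type*} (s : Finset β) {f : β → (Fin l → ℕ) → ℝ}
    (hf : ∀ b, StronglyEventuallyPolynomial (f b)) :
    StronglyEventuallyPolynomial (fun n => ∑ b ∈ s, f b n) := by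
  classical
  induction s using Finset.induction_on with
  | empty => exact ⟨1, one_pos, fun _ => 0, fun n => by simp⟩
  | insert a s ha ih =>
    simp only [Finset.sum_insert ha]
    exact SEP_add (hf a) ih

theorem SEP_prod {l : ℕ} (g : Fin l → ℕ → ℝ)
    (hg : ∀ i, ∃ (c : ℕ) (q : Polynomial ℝ), ∀ m, c < m → g i m = q.eval (m : ℝ)) :
    StronglyEventuallyPolynomial (fun n => ∏ i, g i (n i)) := by
  choose c q h using hg
  rw [SEP_iff]
  refine ⟨Finset.univ.sup c, fun w => ∏ i, match w i with
    | some k => MvPolynomial.C (g i k)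
    | none => Polynomial.aeval (MvPolynomial.X i) (q i), fun n => ?_⟩
  rw [map_prod]
  refine Finset.prod_congr rfl fun i _ => ?_
  by_cases h1 : n i ≤ Finset.univ.sup c
  · simp [h1]
  · have h2 : c i < n i := lt_of_le_of_lt (Finset.le_sup (Finset.mem_univ i)) (not_le.mp h1)
    simp only [h1, if_false]
    rw [h i _ h2]
    have := Polynomial.hom_eval₂ (q i) (algebraMap ℝ (MvPolynomial (Fin l) ℝ))
      (MvPolynomial.eval (fun i => (n i : ℝ))) (MvPolynomial.X i)
    rw [Polynomial.aeval_def, this, Polynomial.eval]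
    congr 1
    · ext x; simp
    · simp

theorem card_block {κ : Type*} [Fintype κ] [Nonempty κ] (g : κ → ℕ) :
    ∃ (c : ℕ) (q : Polynomial ℝ), ∀ m, c < m →
      (Nat.card {a : κ → ℕ // (∀ j, g j ≤ a j) ∧ ∑ j, a j = m} : ℝ) = q.eval (m : ℝ) := by
  classical
  refine ⟨∑ j, g j, Polynomial.preHilbertPoly ℝ (Fintype.card κ - 1) (∑ j, g j), fun m hm => ?_⟩
  rw [Polynomial.preHilbertPoly_eq_choose_sub_add _ _ hm.le]
  have e : {a : κ → ℕ // (∀ j, g j ≤ a j) ∧ ∑ j, a j = m} ≃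
      {a : κ → ℕ // ∑ j, a j = m - ∑ j, g j} :=
    { toFun := fun a => ⟨fun j => a.1 j - g j, by
        have h1 : ∑ j, (a.1 j - g j) + ∑ j, g j = m := by
          rw [← Finset.sum_add_distrib]
          refine Eq.trans ?_ a.2.2
          exact Finset.sum_congr rfl fun j _ => Nat.sub_add_cancel (a.2.1 j)
        exact Nat.eq_sub_of_add_eq h1⟩
      invFun := fun a => ⟨fun j => a.1 j + g j, fun j => Nat.le_add_left _ _, by
        rw [Finset.sum_add_distrib, a.2]; omega⟩
      left_inv := fun a => by
        ext j; exact Nat.sub_add_cancel (a.2.1 j)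
      right_inv := fun a => by
        ext j; simp }
  rw [Nat.card_congr (e.trans (Sym.equivNatSumOfFintype κ _).symm), Nat.card_eq_fintype_card,
    Sym.card_sym_eq_choose]
  have : 0 < Fintype.card κ := Fintype.card_pos
  congr 1
  rw [show Fintype.card κ + (m - ∑ j, g j) - 1 = (m - ∑ j, g j) + (Fintype.card κ - 1) by omega]
  rw [Nat.choose_symm_add]

section
variable {l : ℕ} {κ : Fin l → Type*} [∀ i, Fintype (κ i)]

theorem fin_deg (n : Fin l → ℕ) : {a : (Σ i, κ i) → ℕ | ∀ i, ∑ j, a ⟨i, j⟩ = n i}.Finite := by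
  classical
  refine (Set.finite_Iic (fun x : Σ i, κ i => n x.1)).subset ?_
  rintro a ha ⟨i, j⟩
  have h := ha i
  show a ⟨i, j⟩ ≤ n i
  rw [← h]
  exact Finset.single_le_sum (f := fun j => a ⟨i, j⟩) (fun _ _ => Nat.zero_le _) (Finset.mem_univ j)

theorem SEP_base [∀ i, Nonempty (κ i)] (g : (Σ i, κ i) → ℕ) :
    StronglyEventuallyPolynomial (fun n : Fin l → ℕ =>
      (Set.ncard {a : (Σ i, κ i) → ℕ | g ≤ a ∧ ∀ i, ∑ j, a ⟨i, j⟩ = n i} : ℝ)) := by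
  have key : ∀ n : Fin l → ℕ,
      (Set.ncard {a : (Σ i, κ i) → ℕ | g ≤ a ∧ ∀ i, ∑ j, a ⟨i, j⟩ = n i} : ℝ) =
      ∏ i, (Nat.card {a : κ i → ℕ // (∀ j, g ⟨i, j⟩ ≤ a j) ∧ ∑ j, a j = n i} : ℝ) := by
    intro n
    rw [← Nat.cast_prod, ← Nat.card_pi, ← Nat.card_coe_set_eq]
    congr 1
    refine Nat.card_congr
      { toFun := fun a i => ⟨fun j => a.1 ⟨i, j⟩, fun j => a.2.1 ⟨i, j⟩, a.2.2 i⟩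
        invFun := fun a => ⟨fun x => (a x.1).1 x.2, fun x => (a x.1).2.1 x.2, fun i => (a i).2.2⟩
        left_inv := fun a => rfl
        right_inv := fun a => rfl }
  simp only [key]
  exact SEP_prod (fun i m => (Nat.card {a : κ i → ℕ // (∀ j, g ⟨i, j⟩ ≤ a j) ∧ ∑ j, a j = m} : ℝ))
    (fun i => card_block _)

theorem SEP_avoid [∀ i, Nonempty (κ i)] (G : Finset ((Σ i, κ i) → ℕ)) :
    ∀ g : (Σ i, κ i) → ℕ, StronglyEventuallyPolynomial (fun n : Fin l → ℕ =>
      (Set.ncard {a : (Σ i, κ i) → ℕ | (g ≤ a ∧ ∀ h ∈ G, ¬ h ≤ a) ∧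
        ∀ i, ∑ j, a ⟨i, j⟩ = n i} : ℝ)) := by
  classical
  induction G using Finset.induction_on with
  | empty => intro g; simpa using SEP_base g
  | insert h G hh ih =>
    intro g
    convert SEP_sub (ih g) (ih (g ⊔ h)) using 2 with n
    rw [eq_sub_iff_add_eq, ← Nat.cast_add, ← Set.ncard_union_eq ?_ ((fin_deg n).subset fun a ha => ha.2)
      ((fin_deg n).subset fun a ha => ha.2)]
    · congr 2
      ext a
      simp only [Finset.mem_insert, forall_eq_or_imp, Set.mem_union, Set.mem_ofPred_eq, sup_le_iff]
      tauto
    · rw [Set.disjoint_left]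
      rintro a ⟨⟨_, h1⟩, _⟩ ⟨⟨h2, _⟩, _⟩
      exact h1 h (Finset.mem_insert_self _ _) (sup_le_iff.mp h2).2

theorem SEP_lower [∀ i, Nonempty (κ i)] (S : Set ((Σ i, κ i) → ℕ)) (hS : IsLowerSet S) :
    StronglyEventuallyPolynomial (fun n : Fin l → ℕ =>
      (Set.ncard {a : (Σ i, κ i) → ℕ | a ∈ S ∧ ∀ i, ∑ j, a ⟨i, j⟩ = n i} : ℝ)) := by
  have hfin : {a | Minimal (· ∈ Sᶜ) a}.Finite :=
    WellQuasiOrderedLE.finite_of_isAntichain (setOfPred_minimal_antichain _)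
  convert SEP_avoid hfin.toFinset 0 using 4 with n
  ext a
  simp only [Set.mem_ofPred_eq]
  refine and_congr_left fun _ => ?_
  simp only [Set.Finite.mem_toFinset, Set.mem_ofPred_eq]
  constructor
  · exact fun ha => ⟨fun i => Nat.zero_le _, fun h hh hle => hh.1 (hS hle ha)⟩
  · rintro ⟨-, ha⟩
    by_contra hc
    obtain ⟨m, hm, hmin⟩ := exists_minimal_le_of_wellFoundedLT (· ∈ Sᶜ) a hc
    exact ha m hmin hm

theorem SEP_image [∀ i, Nonempty (κ i)] {X : Type*} {k : ℕ}
    (ψ : ((Σ i, κ i) → ℕ) → Fin k → X)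
    (hψ : ∀ a a' b b' c, ψ a b = ψ a' b' → ψ (a + c) b = ψ (a' + c) b') :
    StronglyEventuallyPolynomial (fun n : Fin l → ℕ =>
      (Set.ncard {x | ∃ a, (∀ i, ∑ j, a ⟨i, j⟩ = n i) ∧ ∃ b, x = ψ a b} : ℝ)) := by
  classical
  let _ : LinearOrder (Σ i, κ i) := linearOrderOfSTO WellOrderingRel
  let key : ((Σ i, κ i) → ℕ) → Fin k → (Lex ((Σ i, κ i) → ℕ)) ×ₗ Fin k :=
    fun a b => toLex (toLex a, b)
  have key_inj : ∀ a b a' b', key a b = key a' b' → a = a' ∧ b = b' := by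
    intro a b a' b' h
    simpa [key] using h
  have key_add : ∀ a b a' b' c, key (a + c) b ≤ key (a' + c) b' → key a b ≤ key a' b' := by
    intro a b a' b' c h
    simp only [key, Prod.Lex.toLex_le_toLex, toLex_add] at h ⊢
    simpa using h
  let S : Fin k → Set ((Σ i, κ i) → ℕ) := fun b => {a | ∀ a' b',
    (∀ i, ∑ j, a' ⟨i, j⟩ = ∑ j, a ⟨i, j⟩) → ψ a' b' = ψ a b → key a b ≤ key a' b'}
  have hS : ∀ b, IsLowerSet (S b) := by
    intro b a a₀ hle ha a' b' hdeg heq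
    obtain ⟨c, rfl⟩ : ∃ c, a = a₀ + c := ⟨a - a₀, (add_tsub_cancel_of_le hle).symm⟩
    apply key_add _ _ _ _ c
    apply ha
    · intro i
      simp [Finset.sum_add_distrib, hdeg i]
    · exact hψ _ _ _ _ _ heq
  have hfin : ∀ (n : Fin l → ℕ) b, {a | a ∈ S b ∧ ∀ i, ∑ j, a ⟨i, j⟩ = n i}.Finite :=
    fun n b => (fin_deg n).subset fun a ha => ha.2
  convert SEP_sum Finset.univ (fun b => SEP_lower (S b) (hS b)) using 2 with n
  rw [← Nat.cast_sum]
  congr 1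
  have h1 : {x | ∃ a, (∀ i, ∑ j, a ⟨i, j⟩ = n i) ∧ ∃ b, x = ψ a b} =
      (fun z : (Fin k) × ((Σ i, κ i) → ℕ) => ψ z.2 z.1) ''
        {z | z.2 ∈ S z.1 ∧ ∀ i, ∑ j, z.2 ⟨i, j⟩ = n i} := by
    ext x
    constructor
    · rintro ⟨a, ha, b, rfl⟩
      let T : Set (Fin k × ((Σ i, κ i) → ℕ)) :=
        {z | (∀ i, ∑ j, z.2 ⟨i, j⟩ = n i) ∧ ψ z.2 z.1 = ψ a b}
      have hT : T.Finite := by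
        refine (Set.finite_univ.prod (fin_deg n)).subset ?_
        intro z hz
        exact ⟨Set.mem_univ _, hz.1⟩
      obtain ⟨z, hz, hmin⟩ := Set.exists_min_image T (fun z => key z.2 z.1) hT ⟨(b, a), ha, rfl⟩
      refine ⟨z, ⟨?_, hz.1⟩, hz.2⟩
      intro a' b' hd he
      exact hmin (b', a') ⟨fun i => (hd i).trans (hz.1 i), he.trans hz.2⟩
    · rintro ⟨z, hz, rfl⟩
      exact ⟨z.2, hz.2, z.1, rfl⟩
  have h2 : {z : (Fin k) × ((Σ i, κ i) → ℕ) | z.2 ∈ S z.1 ∧ ∀ i, ∑ j, z.2 ⟨i, j⟩ = n i} =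
      ↑((Finset.univ.sigma fun b => (hfin n b).toFinset).map
        (Equiv.sigmaEquivProd (Fin k) ((Σ i, κ i) → ℕ)).toEmbedding) := by
    ext ⟨b, a⟩
    simp
  rw [h1, Set.InjOn.ncard_image, h2, Set.ncard_coe_finset, Finset.card_map, Finset.card_sigma]
  · refine Finset.sum_congr rfl fun b _ => ?_
    rw [Set.ncard_eq_toFinset_card _ (hfin n b)]
  · rintro ⟨b, a⟩ ⟨ha, hda⟩ ⟨b', a'⟩ ⟨ha', hda'⟩ h
    have e1 := ha a' b' (fun i => (hda' i).trans (hda i).symm) h.symm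
    have e2 := ha' a b (fun i => (hda i).trans (hda' i).symm) h
    obtain ⟨rfl, rfl⟩ := key_inj _ _ _ _ (le_antisymm e1 e2)
    rfl

end

theorem foldr_eq_prod {X M : Type*} [Monoid M] (φ : M →* Function.End X) (L : List M) (b : X) :
    (L.map fun m => (φ m : X → X)).foldr (fun f y => f y) b = φ L.prod b := by
  induction L with
  | nil => simp; rfl
  | cons f L ih => rw [List.map_cons, List.foldr_cons, ih, List.prod_cons, map_mul]; rfl

theorem sum_count_len {κ : Type*} [Fintype κ] [DecidableEq κ] (L : List κ) :
    ∑ j, L.count j = L.length := by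
  have := Multiset.sum_count_eq_card (s := Finset.univ) (m := (L : Multiset κ)) (by simp)
  simpa using this

theorem exists_list_count {κ : Type*} [Fintype κ] [DecidableEq κ] (a : κ → ℕ) :
    ∃ L : List κ, ∀ j, L.count j = a j := by
  refine ⟨(∑ j, Multiset.replicate (a j) j).toList, fun j => ?_⟩
  rw [← Multiset.coe_count, Multiset.coe_toList, Multiset.count_sum']
  simp [Multiset.count_replicate]

theorem word_eval {X M : Type*} [CommMonoid M] (φ : M →* Function.End X) {l : ℕ}
    {κ : Fin l → Type*} [∀ i, Fintype (κ i)] [∀ i, DecidableEq (κ i)] (e : ∀ i, κ i → M)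
    (v : ∀ i, κ i → X → X) (he : ∀ i j, φ (e i j) = v i j) (L : ∀ i, List (κ i)) (b : X) :
    (List.ofFn fun i => (L i).map (v i)).flatten.foldr (fun f y => f y) b =
      φ (∏ i, ∏ j, e i j ^ (L i).count j) b := by
  have h1 : (List.ofFn fun i => (L i).map (v i)).flatten =
      ((List.ofFn fun i => (L i).map (e i)).flatten).map fun m => (φ m : X → X) := by
    rw [List.map_flatten, List.map_ofFn]
    congr 2
    funext i
    simp only [Function.comp, List.map_map]
    exact List.map_congr_left fun j _ => (he i j).symm
  rw [h1]
  refine (foldr_eq_prod φ _ b).trans ?_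
  rw [List.prod_flatten, List.map_ofFn, List.prod_ofFn]
  have h2 : ∀ i, ((L i).map (e i)).prod = ∏ j, e i j ^ (L i).count j := by
    intro i
    rw [Finset.prod_list_map_count]
    refine Finset.prod_subset (Finset.subset_univ _) fun j _ hj => ?_
    rw [List.count_eq_zero_of_not_mem (by simpa using hj), pow_zero]
  simp only [Function.comp, h2]

theorem SEP_words {X M : Type*} [CommMonoid M] (φ : M →* Function.End X) {l : ℕ}
    {κ : Fin l → Type*} [∀ i, Fintype (κ i)] [∀ i, Nonempty (κ i)] (e : ∀ i, κ i → M)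
    (v : ∀ i, κ i → X → X) (he : ∀ i j, φ (e i j) = v i j) {k : ℕ} (β : Fin k → X) :
    StronglyEventuallyPolynomial (fun n : Fin l → ℕ =>
      (Set.ncard {x : X | ∃ L : ∀ i, List (κ i), (∀ i, (L i).length = n i) ∧
        ∃ b, x = (List.ofFn fun i => (L i).map (v i)).flatten.foldr (fun f y => f y) (β b)}
        : ℝ)) := by
  classical
  have hE : ∀ (a c : (Σ i, κ i) → ℕ) x, φ (∏ i, ∏ j, e i j ^ (a + c) ⟨i, j⟩) x =
      φ (∏ i, ∏ j, e i j ^ c ⟨i, j⟩) (φ (∏ i, ∏ j, e i j ^ a ⟨i, j⟩) x) := by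
    intro a c x
    simp only [Pi.add_apply, pow_add, Finset.prod_mul_distrib]
    rw [mul_comm, map_mul]; rfl
  convert SEP_image (κ := κ) (fun a b => φ (∏ i, ∏ j, e i j ^ a ⟨i, j⟩) (β b)) ?_ using 4 with n
  swap
  · intro a a' b b' c h
    exact (hE _ _ _).trans ((congrArg (φ _) h).trans (hE _ _ _).symm)
  ext x
  constructor
  · rintro ⟨L, hL, b, rfl⟩
    exact ⟨fun x => (L x.1).count x.2, fun i => (sum_count_len (L i)).trans (hL i), b,
      word_eval φ e v he L _⟩
  · rintro ⟨a, ha, b, rfl⟩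
    choose L hL using fun i => exists_list_count (fun j => a ⟨i, j⟩)
    refine ⟨L, fun i => ?_, b, ?_⟩
    · rw [← sum_count_len, ← ha i]
      exact Finset.sum_congr rfl fun j _ => hL i j
    · rw [word_eval φ e v he]
      simp only [hL]

/-- Let `B ⊂ X` be a finite subset, `𝓕` a finite family of mutually
commuting mappings `X → X`, and `P = {P₁,…,P_l}` a partition of `𝓕` into nonempty
blocks. The refined iterated image `𝓕^{(n₁,…,n_l)}(B)` (the union of images of `B`
under compositions `f₁∘⋯∘f_l` in which each `fᵢ` is a composition of `nᵢ` functions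
from the block `Pᵢ`, here encoded by tuples of lists) has cardinality which is a
strongly eventually polynomial function of `(n₁,…,n_l)`. -/
theorem card_refined_iterated_image_strongly_eventually_polynomial
    {X : Type*} (B : Set X) (hB : B.Finite)
    (F : Set (X → X)) (hF : F.Finite)
    (hcomm : ∀ f ∈ F, ∀ g ∈ F, f ∘ g = g ∘ f)
    {l : ℕ} (P : Fin l → Set (X → X))
    (hne : ∀ i, (P i).Nonempty)
    (hdisj : ∀ i j, i ≠ j → Disjoint (P i) (P j))
    (hcover : (⋃ i, P i) = F) :
    StronglyEventuallyPolynomial (fun n : Fin l → ℕ =>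
      (Set.ncard {x : X | ∃ L : Fin l → List (X → X),
        (∀ i, (L i).length = n i ∧ ∀ f ∈ L i, f ∈ P i) ∧
        ∃ b ∈ B, x = (List.ofFn L).flatten.foldr (fun f y => f y) b} : ℝ)) := by

  classical
  subst hcover
  have hfP : ∀ i, (P i).Finite := fun i => hF.subset (Set.subset_iUnion P i)
  let _ : ∀ i, Fintype (P i) := fun i => (hfP i).fintype
  have : ∀ i, Nonempty (P i) := fun i => (hne i).to_subtype
  obtain ⟨M, instM, φ, e, he⟩ : ∃ (M : Type _) (_ : CommMonoid M) (φ : M →* Function.End X)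
      (e : ∀ i, P i → M), ∀ i j, φ (e i j) = j.1 :=
    ⟨Submonoid.closure (M := Function.End X) (⋃ i, P i),
      { (inferInstance : Monoid (Submonoid.closure (M := Function.End X) (⋃ i, P i))) with
        mul_comm := (Submonoid.isMulCommutative_closure (Function.End X) hcomm).is_comm.comm },
      (Submonoid.closure (M := Function.End X) (⋃ i, P i)).subtype,
      fun i f => ⟨f.1, Submonoid.subset_closure (Set.mem_iUnion.2 ⟨i, f.2⟩)⟩, fun i j => rfl⟩
  obtain ⟨k, β, hβ, hβB⟩ : ∃ (k : ℕ) (β : Fin k → X), Function.Injective β ∧ Set.range β = B := by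
    obtain ⟨k, β, h⟩ := hB.fin_embedding
    exact ⟨k, β, β.injective, h⟩
  convert SEP_words φ e (fun i j => j.1) he β using 4 with n
  ext x
  constructor
  · rintro ⟨L, hL, b, hb, rfl⟩
    have : ∀ i, ∃ L' : List (P i), L'.map Subtype.val = L i := fun i =>
      ⟨(L i).attachWith _ (hL i).2, by simp⟩
    choose L' hL' using this
    obtain rfl : (fun i => (L' i).map Subtype.val) = L := funext hL'
    rw [← hβB] at hb
    obtain ⟨b, rfl⟩ := hb
    exact ⟨L', fun i => by rw [← (hL i).1, List.length_map], b, rfl⟩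
  · rintro ⟨L, hL, b, rfl⟩
    refine ⟨fun i => (L i).map Subtype.val, fun i => ⟨?_, ?_⟩, β b, hβB ▸ ⟨b, rfl⟩, rfl⟩
    · rw [List.length_map, hL]
    · intro f hf
      obtain ⟨f, _, rfl⟩ := List.mem_map.1 hf
      exact f.2
end

section
/- Let S be a lower ideal in the poset (ℕ₀^k, ≤) with componentwise ordering. Then there exist a constant N and a polynomial p such that for all integers n ≥ N, the number of elements a = (a₁,…,a_k) ∈ S with a₁+⋯+a_k = n equals p(n). -/
/-- The generating series of the slice counts of `S`. -/
noncomputable def sliceSeries {k : ℕ} (S : Set (Fin k → ℕ)) : PowerSeries ℝ :=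
  PowerSeries.mk fun n => (({a : Fin k → ℕ | a ∈ S ∧ ∑ i, a i = n}.ncard : ℝ))

lemma slice_finite {k : ℕ} (S : Set (Fin k → ℕ)) (n : ℕ) :
    {a : Fin k → ℕ | a ∈ S ∧ ∑ i, a i = n}.Finite := by
  refine (Set.finite_Iic (fun _ : Fin k => n)).subset ?_
  rintro a ⟨_, h⟩ i
  rw [← h]
  exact Finset.single_le_sum (f := a) (fun _ _ => Nat.zero_le _) (Finset.mem_univ i)

/-- Increase the first coordinate by one. -/
def incFirst {k : ℕ} (a : Fin (k + 1) → ℕ) : Fin (k + 1) → ℕ := Fin.cons (a 0 + 1) (Fin.tail a)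

lemma incFirst_inj {k : ℕ} : Function.Injective (incFirst (k := k)) := by
  intro a b h
  have h0 := congrFun h 0
  simp only [incFirst, Fin.cons_zero, Nat.add_right_cancel_iff] at h0
  have h1 : Fin.tail a = Fin.tail b := by
    funext i
    simpa [incFirst] using congrFun h i.succ
  rw [← Fin.cons_self_tail a, ← Fin.cons_self_tail b, h0, h1]

lemma le_incFirst {k : ℕ} (a : Fin (k + 1) → ℕ) : a ≤ incFirst a := by
  intro i
  refine Fin.cases ?_ (fun i => ?_) i <;> simp [incFirst, Fin.tail]

lemma incFirst_mono {k : ℕ} {a b : Fin (k + 1) → ℕ} (h : a ≤ b) : incFirst a ≤ incFirst b := by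
  intro i
  refine Fin.cases ?_ (fun i => ?_) i
  · simpa [incFirst] using h 0
  · simpa [incFirst, Fin.tail] using h i.succ

lemma sliceSeries_succ {k : ℕ} (S : Set (Fin (k + 1) → ℕ)) :
    sliceSeries S = sliceSeries {b : Fin k → ℕ | (Fin.cons 0 b : Fin (k + 1) → ℕ) ∈ S}
      + PowerSeries.X * sliceSeries (incFirst ⁻¹' S) := by
  have cinj : Function.Injective (fun b : Fin k → ℕ => (Fin.cons 0 b : Fin (k + 1) → ℕ)) :=
    Fin.cons_right_injective (α := fun _ => ℕ) 0
  ext n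
  rcases n with _ | n
  · simp only [sliceSeries, map_add, PowerSeries.coeff_mk, PowerSeries.coeff_zero_X_mul, add_zero]
    rw [← Set.ncard_image_of_injective _ cinj]
    congr 2
    ext a
    simp only [Set.mem_ofPred_eq, Set.mem_image, Fin.sum_univ_succ]
    constructor
    · rintro ⟨h, hs⟩
      have h0 : a 0 = 0 := by omega
      have e : (Fin.cons 0 (Fin.tail a) : Fin (k + 1) → ℕ) = a := by
        rw [← h0, Fin.cons_self_tail]
      exact ⟨Fin.tail a, ⟨by rw [e]; exact h, by simpa [h0, Fin.tail] using hs⟩, e⟩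
    · rintro ⟨b, ⟨h, hs⟩, rfl⟩
      exact ⟨h, by simpa using hs⟩
  · simp only [sliceSeries, map_add, PowerSeries.coeff_mk, PowerSeries.coeff_succ_X_mul]
    rw [← Set.ncard_image_of_injective _ cinj, ← Set.ncard_image_of_injective {a | a ∈ incFirst ⁻¹' S ∧ ∑ i, a i = n} incFirst_inj,
      ← Nat.cast_add, ← Set.ncard_union_eq _ ((slice_finite _ _).image _)
        ((slice_finite _ _).image _)]
    · congr 2
      ext a
      simp only [Set.mem_ofPred_eq, Set.mem_image, Set.mem_union, Set.mem_preimage,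
        Fin.sum_univ_succ]
      constructor
      · rintro ⟨h, hs⟩
        rcases h0 : a 0 with _ | m
        · left
          have e : (Fin.cons 0 (Fin.tail a) : Fin (k + 1) → ℕ) = a := by
            rw [← h0, Fin.cons_self_tail]
          exact ⟨Fin.tail a, ⟨by rw [e]; exact h, by simpa [h0, Fin.tail] using hs⟩, e⟩
        · right
          have e : incFirst (Fin.cons m (Fin.tail a) : Fin (k + 1) → ℕ) = a := by
            simp only [incFirst, Fin.cons_zero, Fin.tail_cons]
            rw [← h0, Fin.cons_self_tail]
          refine ⟨Fin.cons m (Fin.tail a), ⟨by rw [e]; exact h, ?_⟩, e⟩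
          simp only [Fin.cons_zero, Fin.cons_succ, Fin.tail]
          omega
      · rintro (⟨b, ⟨h, hs⟩, rfl⟩ | ⟨b, ⟨h, hs⟩, rfl⟩)
        · exact ⟨h, by simpa using hs⟩
        · refine ⟨h, ?_⟩
          simp only [incFirst, Fin.cons_zero, Fin.cons_succ, Fin.tail]
          omega
    · rw [Set.disjoint_left]
      rintro _ ⟨b, _, rfl⟩ ⟨c, _, h⟩
      simpa [incFirst] using congrFun h 0

lemma lowerSet_wf (k : ℕ) : WellFoundedLT (LowerSet (Fin k → ℕ)) := by
  rw [WellFoundedLT, isWellFounded_iff, RelEmbedding.wellFounded_iff_isEmpty]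
  refine ⟨fun f => ?_⟩
  have hlt : ∀ m n, m < n → f n < f m := fun m n h => f.map_rel_iff.2 h
  have hx : ∀ n, ∃ x, x ∈ f n ∧ x ∉ f (n + 1) := fun n =>
    Set.not_subset.1 (hlt n (n + 1) (Nat.lt_succ_self n)).not_ge
  choose x hx1 hx2 using hx
  obtain ⟨m, n, hmn, hle⟩ := wellQuasiOrdered_le x
  refine hx2 m ((f (m + 1)).lower hle ?_)
  rcases (Nat.succ_le_of_lt hmn).eq_or_lt with h | h
  · subst h
    exact hx1 _
  · exact (hlt _ _ h).le (hx1 n)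

lemma sliceSeries_rational (k : ℕ) : ∀ S : LowerSet (Fin k → ℕ),
    ∃ P : Polynomial ℝ, (P : PowerSeries ℝ) = sliceSeries (S : Set (Fin k → ℕ)) *
      (1 - PowerSeries.X) ^ k := by
  induction k with
  | zero =>
    intro S
    refine ⟨Polynomial.C ((({a : Fin 0 → ℕ | a ∈ S ∧ ∑ i, a i = 0}.ncard : ℝ))), ?_⟩
    ext n
    rcases n with _ | n
    · simp [sliceSeries]
    · simp [sliceSeries]
  | succ k ih =>
    intro S
    have := lowerSet_wf (k + 1)
    induction S using WellFoundedLT.induction with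
    | ind S ihS =>
    let T : LowerSet (Fin k → ℕ) :=
      ⟨{b | (Fin.cons 0 b : Fin (k + 1) → ℕ) ∈ (S : Set (Fin (k + 1) → ℕ))}, by
        intro a b hab ha
        exact S.lower (Fin.cons_le_cons.2 ⟨le_rfl, hab⟩) ha⟩
    let S' : LowerSet (Fin (k + 1) → ℕ) :=
      ⟨incFirst ⁻¹' (S : Set (Fin (k + 1) → ℕ)), by
        intro a b hab ha
        exact S.lower (incFirst_mono hab) ha⟩
    have key : sliceSeries (S : Set (Fin (k + 1) → ℕ)) =
      sliceSeries (T : Set (Fin k → ℕ)) +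
        PowerSeries.X * sliceSeries (S' : Set (Fin (k + 1) → ℕ)) := sliceSeries_succ _
    have hle : S' ≤ S := fun a ha => S.lower (le_incFirst a) ha
    obtain ⟨P, hP⟩ := ih T
    rcases hle.eq_or_lt with h | h
    · rw [h] at key
      refine ⟨P, ?_⟩
      rw [hP, pow_succ]
      linear_combination (-(1 - PowerSeries.X) ^ k) * key
    · obtain ⟨Q, hQ⟩ := ihS S' h
      refine ⟨P * (1 - Polynomial.X) + Polynomial.X * Q, ?_⟩
      simp only [Polynomial.coe_add, Polynomial.coe_mul, Polynomial.coe_sub, Polynomial.coe_one,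
        Polynomial.coe_X]
      rw [hP, hQ, key]
      ring


/-- Let `S` be a lower ideal in the poset `(ℕ₀^k, ≤)` with
componentwise ordering. Then there exist a constant `N` and a polynomial `p` such that
for all `n ≥ N`, the number of elements `a = (a₁,…,a_k) ∈ S` with `a₁+⋯+a_k = n`
equals `p(n)`. -/
theorem card_slice_of_lower_ideal_eventually_polynomial
    {k : ℕ} (S : Set (Fin k → ℕ))
    (hS : ∀ a b : Fin k → ℕ, a ≤ b → b ∈ S → a ∈ S) :
    ∃ (N : ℕ) (p : Polynomial ℝ), ∀ n : ℕ, N ≤ n →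
      (({a : Fin k → ℕ | a ∈ S ∧ ∑ i, a i = n}.ncard : ℝ)) = p.eval (n : ℝ) := by
  obtain ⟨P, hP⟩ := sliceSeries_rational k ⟨S, fun b a hab hb => hS a b hab hb⟩
  refine ⟨P.natDegree + 1, Polynomial.hilbertPoly P k, fun n hn => ?_⟩
  rw [← Polynomial.coeff_mul_invOneSubPow_eq_hilbertPoly_eval k (Nat.lt_of_succ_le hn), hP,
    ← PowerSeries.invOneSubPow_inv_eq_one_sub_pow, mul_assoc, Units.inv_eq_val_inv,
    Units.inv_mul, mul_one]
  simp only [sliceSeries, PowerSeries.coeff_mk]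
  rfl
end

section
/- Let (G,+) be a commutative semigroup, A, B ⊂ G two finite subsets, and ψ : G → ℂ an additive character of G. Then there exist polynomials p_a ∈ ℂ[x], indexed by a ∈ A, and a constant N such that for all integers n ≥ N, Σ_{g ∈ n*A+B} ψ(g) = Σ_{a ∈ A} p_a(n) ψ(a)^n. -/
open Pointwise

/-- The `n`-fold sumset `n*A = {a₁+⋯+a_n : aᵢ ∈ A}` of a finite set in a
(commutative) semigroup, defined for `n ≥ 1` (the value at `n = 0` is an irrelevant
junk value `∅`). -/
def nmulFinset {G : Type*} [Add G] [DecidableEq G] (A : Finset G) : ℕ → Finset G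
  | 0 => ∅
  | 1 => A
  | n + 2 => nmulFinset A (n + 1) + A


namespace Khov

open Polynomial Finset

/-- The shift operator on complex sequences. -/
noncomputable def shiftE : Module.End ℂ (ℕ → ℂ) where
  toFun s n := s (n + 1)
  map_add' _ _ := rfl
  map_smul' _ _ := rfl

@[simp] lemma shiftE_apply (s : ℕ → ℂ) (n : ℕ) : shiftE s n = s (n + 1) := rfl

/-- The annihilating polynomial attached to a finite set of values. -/
noncomputable def annPoly (S : Finset ℂ) : ℂ[X] := ∏ c ∈ S, (X - C c)

/-- Sequences killed by a power of `annPoly S` evaluated at the shift. -/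
noncomputable def good (S : Finset ℂ) : Submodule ℂ (ℕ → ℂ) :=
  (aeval shiftE (annPoly S)).maxGenEigenspace 0

lemma mem_good {S : Finset ℂ} {s : ℕ → ℂ} :
    s ∈ good S ↔ ∃ k : ℕ, aeval shiftE (annPoly S ^ k) s = 0 := by
  simp [good, Module.End.mem_maxGenEigenspace]

lemma shift_mem_good {S : Finset ℂ} {s : ℕ → ℂ} (h : s ∈ good S) : shiftE s ∈ good S := by
  rw [mem_good] at *
  obtain ⟨k, hk⟩ := h
  refine ⟨k, ?_⟩
  have : aeval shiftE (annPoly S ^ k * X) s = aeval shiftE (X * annPoly S ^ k) s := by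
    rw [mul_comm]
  rw [map_mul, map_mul, aeval_X, Module.End.mul_apply, Module.End.mul_apply, hk] at this
  simpa using this

lemma mem_good_of_sub {S : Finset ℂ} {s : ℕ → ℂ} {c : ℂ} (hc : c ∈ S)
    (h : shiftE s - c • s ∈ good S) : s ∈ good S := by
  rw [mem_good] at *
  obtain ⟨k, hk⟩ := h
  refine ⟨k + 1, ?_⟩
  have h1 : annPoly S ^ (k + 1) = (∏ c ∈ S.erase c, (X - C c)) * (annPoly S ^ k * (X - C c)) := by
    have : annPoly S = (X - C c) * (∏ c ∈ S.erase c, (X - C c)) :=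
      (mul_prod_erase S (fun c => (X - C c)) hc).symm
    rw [pow_succ]
    nth_rewrite 2 [this]
    ring
  have h2 : aeval shiftE (X - C c) s = shiftE s - c • s := by
    simp [Module.algebraMap_end_apply]
  rw [h1, map_mul, map_mul, Module.End.mul_apply, Module.End.mul_apply, h2, hk, map_zero]

/-- Sequences eventually of exponential-polynomial form. -/
def formSub {σ : Type*} [Fintype σ] (z : σ → ℂ) : Submodule ℂ (ℕ → ℂ) where
  carrier := {s | ∃ (p : σ → ℂ[X]) (N : ℕ), ∀ n, N ≤ n → s n = ∑ i, (p i).eval (n : ℂ) * z i ^ n}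
  zero_mem' := ⟨0, 0, by simp⟩
  add_mem' := by
    rintro s t ⟨p, N, hp⟩ ⟨q, M, hq⟩
    refine ⟨p + q, max N M, fun n hn => ?_⟩
    simp [hp n (le_trans (le_max_left _ _) hn), hq n (le_trans (le_max_right _ _) hn), add_mul,
      sum_add_distrib]
  smul_mem' := by
    rintro c s ⟨p, N, hp⟩
    refine ⟨c • p, N, fun n hn => ?_⟩
    simp [hp n hn, mul_sum, mul_assoc]

lemma ker_zero (k : ℕ) {s : ℕ → ℂ} (h : (shiftE ^ k) s = 0) (n : ℕ) (hn : k ≤ n) : s n = 0 := by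
  have key : ∀ (k : ℕ) (s : ℕ → ℂ) (m : ℕ), (shiftE ^ k) s m = s (m + k) := by
    intro k
    induction k with
    | zero => simp
    | succ k ih =>
      intro s m
      rw [pow_succ, Module.End.mul_apply, ih]
      rw [shiftE_apply]; rfl
  have := key k s (n - k)
  rw [h, Nat.sub_add_cancel hn] at this
  simpa using this.symm

lemma ker_ne (c : ℂ) (hc : c ≠ 0) (k : ℕ) {s : ℕ → ℂ}
    (h : (aeval shiftE ((X - C c) ^ k)) s = 0) :
    ∃ p : ℂ[X], ∀ n : ℕ, s n = p.eval (n : ℂ) * c ^ n := by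
  have key : ∀ (k : ℕ) (t : ℕ → ℂ) (n : ℕ), (aeval shiftE ((X - C c) ^ k)) (fun n => c ^ n * t n) n
      = c ^ (n + k) * ((fwdDiff 1)^[k] t n) := by
    intro k
    induction k with
    | zero => intro t n; simp
    | succ k ih =>
      intro t n
      rw [pow_succ, map_mul, Module.End.mul_apply]
      have : (aeval shiftE (X - C c)) (fun n => c ^ n * t n)
          = fun n => c ^ n * (c * fwdDiff 1 t n) := by
        funext n
        simp [Module.algebraMap_end_apply, fwdDiff]
        ring
      rw [this, ih]
      have h2 : (fun n => c * fwdDiff 1 t n) = c • fwdDiff 1 t := rfl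
      rw [h2, fwdDiff_iter_const_smul, Function.iterate_succ_apply]
      simp only [Pi.smul_apply, smul_eq_mul]
      ring
  set t : ℕ → ℂ := fun n => s n / c ^ n with ht
  have hs : s = fun n => c ^ n * t n := by
    funext n; simp only [ht]; field_simp
  have hd : ∀ n, (fwdDiff 1)^[k] t n = 0 := by
    intro n
    have := key k t n
    rw [← hs, h] at this
    simpa [hc] using this.symm
  have hd' : ∀ j, k ≤ j → (fwdDiff 1)^[j] t 0 = 0 := by
    intro j hj
    obtain ⟨i, rfl⟩ := Nat.exists_eq_add_of_le' hj
    rw [Function.iterate_add_apply]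
    have : (fwdDiff 1)^[k] t = fun _ => 0 := funext hd
    rw [this]
    clear hj
    induction i with
    | zero => rfl
    | succ i ih =>
      rw [Function.iterate_succ_apply]
      convert ih using 2
      funext n
      simp [fwdDiff]
  refine ⟨∑ j ∈ range k, C ((fwdDiff 1)^[j] t 0 / (j.factorial : ℂ)) * descPochhammer ℂ j,
    fun n => ?_⟩
  have h1 : t n = ∑ j ∈ range k, (n.choose j : ℂ) * (fwdDiff 1)^[j] t 0 := by
    have := shift_eq_sum_fwdDiff_iter 1 t n 0
    simp only [zero_add, smul_eq_mul, mul_one, nsmul_eq_mul] at this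
    rw [this]
    have a1 := sum_subset (range_mono (le_max_left (n + 1) k))
      (f := fun j => (n.choose j : ℂ) * (fwdDiff 1)^[j] t 0) (by
        intro j _ hj
        simp only [mem_range, not_lt] at hj
        simp [Nat.choose_eq_zero_of_lt (show n < j by omega)])
    have a2 := sum_subset (range_mono (le_max_right (n + 1) k))
      (f := fun j => (n.choose j : ℂ) * (fwdDiff 1)^[j] t 0) (by
        intro j _ hj
        simp only [mem_range, not_lt] at hj
        simp [hd' j hj])
    rw [a1, a2]
  rw [hs]
  simp only
  rw [h1, mul_comm, eval_finsetSum]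
  congr 1
  refine sum_congr rfl fun j _ => ?_
  rw [Nat.cast_choose_eq_descPochhammer_div]
  simp only [eval_mul, eval_C]
  ring

lemma good_le_form {σ : Type*} [Fintype σ] (z : σ → ℂ) (S : Finset ℂ)
    (hS : ∀ c ∈ S, c = 0 ∨ ∃ i, z i = c) : good S ≤ formSub z := by
  classical
  intro s hs
  rw [mem_good] at hs
  obtain ⟨k, hk⟩ := hs
  have main : LinearMap.ker (aeval shiftE (∏ c ∈ S, (X - C c) ^ k)) ≤ formSub z := by
    clear hk
    induction S using Finset.induction_on with
    | empty =>
      intro s hs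
      have : s = 0 := by simpa using hs
      rw [this]; exact zero_mem _
    | insert c S hcS ih =>
      rw [prod_insert hcS, ← sup_ker_aeval_eq_ker_aeval_mul_of_coprime]
      · refine sup_le ?_ (ih fun c hc => hS c (mem_insert_of_mem hc))
        intro s hs
        rw [LinearMap.mem_ker] at hs
        by_cases hc : c = 0
        · subst hc
          refine ⟨0, k, fun n hn => ?_⟩
          have := ker_zero k (s := s) (by simpa using hs) n hn
          simp [this]
        · obtain ⟨i, hi⟩ := (hS c (mem_insert_self _ _)).resolve_left hc
          obtain ⟨p, hp⟩ := ker_ne c hc k hs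
          refine ⟨Pi.single i p, 0, fun n _ => ?_⟩
          rw [hp, sum_eq_single i]
          · simp [hi]
          · intro j _ hj; simp [hj]
          · simp
      · refine IsCoprime.prod_right fun d hd => IsCoprime.pow ?_
        refine isCoprime_X_sub_C_of_isUnit_sub ?_
        rw [isUnit_iff_ne_zero, sub_ne_zero]
        rintro rfl
        exact hcS hd
  refine main ?_
  rw [LinearMap.mem_ker, prod_pow]
  exact hk

lemma lowerSet_wf {σ : Type*} [Finite σ] : WellFoundedLT (LowerSet (σ → ℕ)) := by
  refine ⟨?_⟩
  rw [wellFounded_iff_isEmpty_descending_chain]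
  refine ⟨fun ⟨D, hD⟩ => ?_⟩
  have hanti : Antitone D := antitone_nat_of_succ_le fun n => (hD n).le
  have : ∀ n, ∃ x, x ∈ D n ∧ x ∉ D (n + 1) := fun n => by
    have := (hD n).not_ge
    by_contra! hh
    exact this fun x hx => hh x hx
  choose x hx hx' using this
  obtain ⟨i, j, hij, hle⟩ := wellQuasiOrdered_le x
  exact hx' i ((D (i + 1)).lower hle (hanti (Nat.succ_le_of_lt hij) (hx j)))

section
set_option linter.unusedSectionVars false
variable {σ : Type*} [Fintype σ] [DecidableEq σ]

open Classical in
/-- The weighted count of degree `n` elements of a lower set. -/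
noncomputable def cnt (z : σ → ℂ) (D : LowerSet (σ → ℕ)) (n : ℕ) : ℂ :=
  ∑ u ∈ (piAntidiag univ n).filter (fun u => u ∈ D), ∏ i, z i ^ u i

/-- Slice at `u a = 0`. -/
def slice (D : LowerSet (σ → ℕ)) (a : σ) : LowerSet (σ → ℕ) where
  carrier := {u | u ∈ D ∧ u a = 0}
  lower' := fun _ _ huv hu => ⟨D.lower huv hu.1, Nat.le_zero.1 (hu.2 ▸ huv a)⟩

/-- Translate by a unit vector. -/
def colon (D : LowerSet (σ → ℕ)) (a : σ) : LowerSet (σ → ℕ) where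
  carrier := {u | u + Pi.single a 1 ∈ D}
  lower' := fun _ _ huv hu => D.lower (add_le_add_left huv _) hu

lemma mem_slice {D : LowerSet (σ → ℕ)} {a : σ} {u : σ → ℕ} :
    u ∈ slice D a ↔ u ∈ D ∧ u a = 0 := Iff.rfl

lemma mem_colon {D : LowerSet (σ → ℕ)} {a : σ} {u : σ → ℕ} :
    u ∈ colon D a ↔ u + Pi.single a 1 ∈ D := Iff.rfl

lemma cnt_succ (z : σ → ℂ) (D : LowerSet (σ → ℕ)) (a : σ) (n : ℕ) :
    cnt z D (n + 1) = cnt z (slice D a) (n + 1) + z a * cnt z (colon D a) n := by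
  classical
  unfold cnt
  rw [← sum_filter_add_sum_filter_not _ (fun u : σ → ℕ => u a = 0)]
  congr 1
  · rw [filter_filter]
    refine sum_congr (filter_congr fun u _ => ?_) fun _ _ => rfl
    exact mem_slice.symm
  · rw [mul_sum]
    symm
    refine sum_bij (fun u _ => u + Pi.single a 1) ?_ ?_ ?_ ?_
    · intro u hu
      simp only [mem_filter, mem_piAntidiag, mem_univ, implies_true, and_true, mem_colon] at hu ⊢
      refine ⟨⟨?_, hu.2⟩, by simp⟩
      simp [sum_add_distrib, hu.1]
    · intro u _ v _ h
      exact add_right_cancel h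
    · intro u hu
      simp only [mem_filter, mem_piAntidiag, mem_univ, implies_true, and_true] at hu
      have hle : Pi.single a 1 ≤ u := by
        intro i
        by_cases hi : i = a
        · subst hi; simp; omega
        · simp [hi]
      refine ⟨u - Pi.single a 1, ?_, tsub_add_cancel_of_le hle⟩
      simp only [mem_filter, mem_piAntidiag, mem_univ, implies_true, and_true, mem_colon,
        tsub_add_cancel_of_le hle]
      refine ⟨?_, hu.1.2⟩
      have := hu.1.1
      rw [← tsub_add_cancel_of_le hle] at this
      simp only [Pi.add_apply, sum_add_distrib, sum_pi_single', mem_univ, if_true] at this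
      exact Nat.succ_injective this
    · intro u _
      simp only [Pi.add_apply, pow_add, prod_mul_distrib]
      rw [mul_comm]
      congr 1
      rw [prod_eq_single a]
      · simp
      · intro j _ hj; simp [hj]
      · simp

lemma cnt_mem_good (z : σ → ℂ) (S : Finset ℂ) (h0 : 0 ∈ S) (hz : ∀ i, z i ∈ S)
    (D : LowerSet (σ → ℕ)) : cnt z D ∈ good S := by
  classical
  have := lowerSet_wf (σ := σ)
  induction D using WellFoundedLT.induction with
  | ind D ih =>
  by_cases hD : ∃ a, Pi.single a 1 ∈ D
  · obtain ⟨a, ha⟩ := hD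
    have hs : slice D a < D := by
      refine lt_of_le_of_ne (fun u hu => hu.1) fun h => ?_
      rw [← h, mem_slice] at ha
      simp at ha
    have hc : colon D a ≤ D := fun u hu => D.lower (by simp) hu
    have hE : shiftE (cnt z D) = shiftE (cnt z (slice D a)) + z a • cnt z (colon D a) := by
      funext n
      exact cnt_succ z D a n
    have h1 := shift_mem_good (ih _ hs)
    rcases hc.lt_or_eq with hc | hc
    · refine mem_good_of_sub h0 ?_
      rw [zero_smul, sub_zero, hE]
      exact add_mem h1 (Submodule.smul_mem _ _ (ih _ hc))
    · refine mem_good_of_sub (hz a) ?_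
      rw [hE, hc, add_sub_cancel_right]
      exact h1
  · refine mem_good_of_sub h0 ?_
    have : shiftE (cnt z D) = 0 := by
      funext n
      simp only [shiftE_apply, cnt, Pi.zero_apply]
      rw [filter_false_of_mem, sum_empty]
      intro u hu huD
      simp only [mem_piAntidiag, mem_univ, implies_true, and_true] at hu
      have : ∃ a, u a ≠ 0 := by
        by_contra! hh
        simp [hh] at hu
      obtain ⟨a, ha⟩ := this
      refine hD ⟨a, D.lower ?_ huD⟩
      intro i
      by_cases hi : i = a
      · subst hi; simp; omega
      · simp [hi]
    rw [zero_smul, sub_zero, this]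
    exact zero_mem _

lemma cnt_mem_form (z : σ → ℂ) (D : LowerSet (σ → ℕ)) : cnt z D ∈ formSub z := by
  classical
  refine good_le_form z (insert 0 (univ.image z)) ?_ (cnt_mem_good z _ (by simp) (by simp) D)
  intro c hc
  simpa [eq_comm] using hc

end

section
set_option linter.unusedSectionVars false
variable {σ τ M : Type*} [Fintype σ] [LinearOrder σ] [Fintype τ] [LinearOrder τ]
  [AddCommMonoid M]

/-- Evaluation of a formal representation. -/
def repVal (a : σ → M) (b : τ → M) (x : (σ → ℕ) × τ) : M := ∑ i, x.1 i • a i + b x.2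

lemma repVal_add (a : σ → M) (b : τ → M) (u w : σ → ℕ) (j : τ) :
    repVal a b (u + w, j) = ∑ i, w i • a i + repVal a b (u, j) := by
  simp only [repVal, Pi.add_apply, add_smul, sum_add_distrib]
  abel

/-- The key used to pick minimal representations. -/
def key (x : (σ → ℕ) × τ) : Lex (Lex (σ → ℕ) × τ) := toLex (toLex x.1, x.2)

lemma key_inj {x y : (σ → ℕ) × τ} (h : key x = key y) : x = y := h

/-- Exponents giving minimal representations with last term `b j`. -/
def minSet (a : σ → M) (b : τ → M) (j : τ) : LowerSet (σ → ℕ) where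
  carrier := {u | ∀ x : (σ → ℕ) × τ, ∑ i, x.1 i = ∑ i, u i → repVal a b x = repVal a b (u, j) →
    key (u, j) ≤ key x}
  lower' := by
    intro u v hvu hu x hx hval
    obtain ⟨w, rfl⟩ := exists_add_of_le hvu
    have h := hu (x.1 + w, x.2) (by simp [sum_add_distrib, hx])
      (by rw [repVal_add, repVal_add]; congr 1)
    rw [key, key, Prod.Lex.toLex_le_toLex] at h ⊢
    simp only at h ⊢
    rcases h with h | ⟨h, h'⟩
    · left
      rw [toLex_add, toLex_add] at h
      exact lt_of_add_lt_add_right h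
    · right
      rw [toLex_add, toLex_add] at h
      exact ⟨add_right_cancel h, h'⟩

lemma mem_minSet {a : σ → M} {b : τ → M} {j : τ} {u : σ → ℕ} : u ∈ minSet a b j ↔
    ∀ x : (σ → ℕ) × τ, ∑ i, x.1 i = ∑ i, u i → repVal a b x = repVal a b (u, j) →
    key (u, j) ≤ key x := Iff.rfl

lemma core [DecidableEq M] (a : σ → M) (b : τ → M) (χ : M → ℂ) (z : σ → ℂ) (y : τ → ℂ)
    (hχ : ∀ u j, χ (repVal a b (u, j)) = y j * ∏ i, z i ^ u i) (n : ℕ) :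
    ∑ g ∈ (piAntidiag (univ : Finset σ) n ×ˢ (univ : Finset τ)).image (repVal a b), χ g
      = ∑ j, y j * cnt z (minSet a b j) n := by
  classical
  set P := piAntidiag (univ : Finset σ) n ×ˢ (univ : Finset τ) with hP
  set Q := P.filter (fun x => x.1 ∈ minSet a b x.2) with hQ
  have memP : ∀ x : (σ → ℕ) × τ, x ∈ P ↔ ∑ i, x.1 i = n := by
    intro x
    simp [hP]
  have hinj : Set.InjOn (repVal a b) (Q : Set ((σ → ℕ) × τ)) := by
    intro x hx x' hx' h
    rw [mem_coe, hQ, mem_filter, memP] at hx hx'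
    refine key_inj (le_antisymm (hx.2 x' (hx'.1.trans hx.1.symm) h.symm) 
      (hx'.2 x (hx.1.trans hx'.1.symm) h))
  have himg : P.image (repVal a b) = Q.image (repVal a b) := by
    refine Subset.antisymm ?_ (image_subset_image (filter_subset _ _))
    intro g hg
    obtain ⟨x, hx, rfl⟩ := mem_image.1 hg
    obtain ⟨m, hm, hmin⟩ := exists_min_image (P.filter (fun x' => repVal a b x' = repVal a b x)) key
      ⟨x, by simp [hx]⟩
    rw [mem_filter] at hm
    refine mem_image.2 ⟨m, mem_filter.2 ⟨hm.1, ?_⟩, hm.2⟩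
    intro x' h1 h2
    refine hmin x' (mem_filter.2 ⟨(memP _).2 (h1.trans ((memP _).1 hm.1)), h2.trans hm.2⟩)
  rw [himg, sum_image hinj, hQ, sum_filter, hP, sum_product_right]
  refine sum_congr rfl fun j _ => ?_
  rw [cnt, mul_sum, sum_filter]
  refine sum_congr rfl fun u _ => ?_
  simp only [hχ]

end

/-- Extension of a character to `WithZero G`. -/
def ext0 {G : Type*} (ψ : G → ℂ) : WithZero G → ℂ := fun x => WithZero.recZeroCoe 1 ψ x

section
set_option linter.unusedSectionVars false
variable {G : Type*} [AddCommSemigroup G]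

@[simp] lemma ext0_zero (ψ : G → ℂ) : ext0 ψ 0 = 1 := rfl
@[simp] lemma ext0_coe (ψ : G → ℂ) (g : G) : ext0 ψ (g : WithZero G) = ψ g := rfl

lemma ext0_add (ψ : G → ℂ) (hψ : ∀ a b : G, ψ (a + b) = ψ a * ψ b) (x y : WithZero G) :
    ext0 ψ (x + y) = ext0 ψ x * ext0 ψ y := by
  induction x using WithZero.recZeroCoe with
  | zero => simp
  | coe x =>
    induction y using WithZero.recZeroCoe with
    | zero => simp
    | coe y => exact hψ x y

lemma ext0_nsmul (ψ : G → ℂ) (hψ : ∀ a b : G, ψ (a + b) = ψ a * ψ b) (n : ℕ) (x : WithZero G) :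
    ext0 ψ (n • x) = ext0 ψ x ^ n := by
  induction n with
  | zero => simp
  | succ n ih => rw [succ_nsmul, ext0_add ψ hψ, ih, pow_succ]

lemma ext0_sum (ψ : G → ℂ) (hψ : ∀ a b : G, ψ (a + b) = ψ a * ψ b) {ι : Type*} (s : Finset ι)
    (f : ι → WithZero G) : ext0 ψ (∑ i ∈ s, f i) = ∏ i ∈ s, ext0 ψ (f i) := by
  classical
  induction s using Finset.induction_on with
  | empty => simp
  | insert i s hi ih => rw [sum_insert hi, prod_insert hi, ext0_add ψ hψ, ih]

lemma mem_nmul [DecidableEq G] {σ : Type*} [Fintype σ] [DecidableEq σ] (A : Finset G) (a : σ → G)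
    (ha : ∀ g, g ∈ A ↔ ∃ i, a i = g) (n : ℕ) : ∀ x : WithZero G,
    (∃ g ∈ nmulFinset A (n + 1), (g : WithZero G) = x) ↔
      ∃ u : σ → ℕ, ∑ i, u i = n + 1 ∧ ∑ i, u i • (a i : WithZero G) = x := by
  have hsum : ∀ (u : σ → ℕ) (i : σ), ∑ j, (u + Pi.single i 1 : σ → ℕ) j • (a j : WithZero G)
      = ∑ j, u j • (a j : WithZero G) + a i := by
    intro u i
    simp only [Pi.add_apply, add_smul, sum_add_distrib]
    congr 1
    rw [sum_eq_single i]
    · simp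
    · intro j _ hj; simp [hj]
    · simp
  have hdec : ∀ (u : σ → ℕ) (m : ℕ), ∑ i, u i = m + 1 →
      ∃ (v : σ → ℕ) (i : σ), u = v + Pi.single i 1 ∧ ∑ i, v i = m := by
    intro u m hu
    have : ∃ i, u i ≠ 0 := by
      by_contra! hh
      simp [hh] at hu
    obtain ⟨i, hi⟩ := this
    have hle : Pi.single i 1 ≤ u := by
      intro j
      by_cases hj : j = i
      · subst hj; simp; omega
      · simp [hj]
    refine ⟨u - Pi.single i 1, i, (tsub_add_cancel_of_le hle).symm, ?_⟩
    rw [← tsub_add_cancel_of_le hle] at hu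
    simp only [Pi.add_apply, sum_add_distrib, sum_pi_single', mem_univ, if_true] at hu
    exact Nat.succ_injective hu
  induction n with
  | zero =>
    intro x
    constructor
    · rintro ⟨g, hg, rfl⟩
      obtain ⟨i, rfl⟩ := (ha g).1 hg
      refine ⟨0 + Pi.single i 1, by simp, ?_⟩
      rw [hsum]; simp
    · rintro ⟨u, hu, rfl⟩
      obtain ⟨v, i, rfl, hv⟩ := hdec u 0 hu
      refine ⟨a i, (ha _).2 ⟨i, rfl⟩, ?_⟩
      have hv0 : ∀ i, v i = 0 := by simpa using hv
      rw [hsum]; simp [hv0]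
  | succ n ih =>
    intro x
    have hdef : nmulFinset A (n + 1 + 1) = nmulFinset A (n + 1) + A := rfl
    rw [hdef]
    constructor
    · rintro ⟨g, hg, rfl⟩
      obtain ⟨g', hg', c, hc, rfl⟩ := mem_add.1 hg
      obtain ⟨i, rfl⟩ := (ha c).1 hc
      obtain ⟨u, hu, hu'⟩ := (ih g').1 ⟨g', hg', rfl⟩
      refine ⟨u + Pi.single i 1, by simp [sum_add_distrib, hu], ?_⟩
      rw [hsum, hu', WithZero.coe_add]
    · rintro ⟨u, hu, rfl⟩
      obtain ⟨v, i, rfl, hv⟩ := hdec u (n + 1) hu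
      obtain ⟨g', hg', h⟩ := (ih _).2 ⟨v, hv, rfl⟩
      refine ⟨g' + a i, add_mem_add hg' ((ha _).2 ⟨i, rfl⟩), ?_⟩
      rw [hsum, ← h, WithZero.coe_add]

end

end Khov

open Khov Finset

/-- Khovanskiĭ. Let `(G,+)` be a commutative semigroup, `A, B ⊂ G`
two finite subsets, and `ψ : G → ℂ` an additive character of `G`. Then there exist
polynomials `p_a ∈ ℂ[x]`, indexed by `a ∈ A`, and a constant `N` such that for all
integers `n ≥ N`, `Σ_{g ∈ n*A+B} ψ(g) = Σ_{a ∈ A} p_a(n) ψ(a)^n`. -/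
theorem character_sum_over_affine_sumset
    {G : Type*} [AddCommSemigroup G] [DecidableEq G] (A B : Finset G)
    (ψ : G → ℂ) (hψ : ∀ a b : G, ψ (a + b) = ψ a * ψ b) :
    ∃ (p : G → Polynomial ℂ) (N : ℕ), ∀ n : ℕ, N ≤ n →
      ∑ g ∈ nmulFinset A n + B, ψ g = ∑ a ∈ A, (p a).eval (n : ℂ) * ψ a ^ n := by
  classical
  let a : Fin A.card → G := fun i => (A.equivFin.symm i : G)
  let b : Fin B.card → G := fun i => (B.equivFin.symm i : G)
  have ha : ∀ g, g ∈ A ↔ ∃ i, a i = g := by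
    intro g
    constructor
    · intro hg
      exact ⟨A.equivFin ⟨g, hg⟩, by simp [a]⟩
    · rintro ⟨i, rfl⟩
      exact (A.equivFin.symm i).2
  have hb : ∀ g, g ∈ B ↔ ∃ i, b i = g := by
    intro g
    constructor
    · intro hg
      exact ⟨B.equivFin ⟨g, hg⟩, by simp [b]⟩
    · rintro ⟨i, rfl⟩
      exact (B.equivFin.symm i).2
  let a' : Fin A.card → WithZero G := fun i => (a i : WithZero G)
  let b' : Fin B.card → WithZero G := fun i => (b i : WithZero G)
  let z : Fin A.card → ℂ := fun i => ψ (a i)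
  have hχ : ∀ u j, ext0 ψ (repVal a' b' (u, j)) = ψ (b j) * ∏ i, z i ^ u i := by
    intro u j
    rw [repVal, ext0_add ψ hψ, ext0_sum ψ hψ, mul_comm]
    simp [ext0_nsmul ψ hψ, a', b', z]
  have hform : (∑ j, ψ (b j) • cnt z (minSet a' b' j)) ∈ formSub z :=
    sum_mem fun j _ => Submodule.smul_mem _ _ (cnt_mem_form z _)
  obtain ⟨p, N, hp⟩ := hform
  refine ⟨fun g => if h : g ∈ A then p (A.equivFin ⟨g, h⟩) else 0, N + 1, fun n hn => ?_⟩
  obtain ⟨m, rfl⟩ : ∃ m, n = m + 1 := ⟨n - 1, by omega⟩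
  have himg : (nmulFinset A (m + 1) + B).image (fun g : G => (g : WithZero G))
      = (piAntidiag (univ : Finset (Fin A.card)) (m + 1) ×ˢ
          (univ : Finset (Fin B.card))).image (repVal a' b') := by
    ext x
    simp only [mem_image, mem_product, mem_piAntidiag, mem_univ, implies_true, and_true,
      Prod.exists]
    constructor
    · rintro ⟨g, hg, rfl⟩
      obtain ⟨g', hg', c, hc, rfl⟩ := mem_add.1 hg
      obtain ⟨j, rfl⟩ := (hb c).1 hc
      obtain ⟨u, hu, hu'⟩ := (mem_nmul A a ha m g').1 ⟨g', hg', rfl⟩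
      refine ⟨u, j, hu, ?_⟩
      rw [WithZero.coe_add, ← hu']
      rfl
    · rintro ⟨u, j, hu, rfl⟩
      obtain ⟨g', hg', h⟩ := (mem_nmul A a ha m _).2 ⟨u, hu, rfl⟩
      refine ⟨g' + b j, add_mem_add hg' ((hb _).2 ⟨j, rfl⟩), ?_⟩
      rw [WithZero.coe_add, h]
      rfl
  have h1 : ∑ g ∈ nmulFinset A (m + 1) + B, ψ g
      = ∑ x ∈ (nmulFinset A (m + 1) + B).image (fun g : G => (g : WithZero G)), ext0 ψ x := by
    rw [sum_image (fun x _ y _ h => WithZero.coe_inj.1 h)]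
    rfl
  rw [h1, himg, core a' b' (ext0 ψ) z (fun j => ψ (b j)) hχ]
  have h2 := hp (m + 1) (by omega)
  simp only [Finset.sum_apply, Pi.smul_apply, smul_eq_mul] at h2
  rw [h2, ← sum_coe_sort A]
  refine Fintype.sum_equiv A.equivFin.symm _ _ fun i => ?_
  simp [z, a]
end

section
/- Let k ∈ ℕ and let P ⊂ ℝ^k be a lattice polytope. Then for every integer n ≥ k, the following identity of subsets of ℤ^k holds: nP ∩ ℤ^k = (n−k)*(P ∩ ℤ^k) + (kP ∩ ℤ^k), where the sumset operations are taken in the additive group (ℤ^k, +). -/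
open Pointwise

/-- The `n`-fold sumset `n*A` in the additive group `ℤ^k`, with `0*A = {0}`. -/
def iterSumset {G : Type*} [AddCommMonoid G] : ℕ → Set G → Set G
  | 0, _ => {0}
  | n + 1, A => iterSumset n A + A

theorem step_mem {k : ℕ} (hk : 0 < k) (V : Finset (Fin k → ℝ)) (n : ℕ) (hn : k ≤ n)
    (x : Fin k → ℝ) (hx : x ∈ ((n : ℝ) + 1) • convexHull ℝ (V : Set (Fin k → ℝ))) :
    ∃ v ∈ V, x - v ∈ (n : ℝ) • convexHull ℝ (V : Set (Fin k → ℝ)) := by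
  classical
  obtain ⟨y, hy, rfl⟩ := hx
  obtain ⟨ι, hι, z, w, hz, hai, hw, hw1, rfl⟩ := eq_pos_convex_span_of_mem_convexHull hy
  have hcard : Fintype.card ι ≤ k + 1 := by
    have h1 := hai.card_le_finrank_succ
    have h2 := Submodule.finrank_le (vectorSpan ℝ (Set.range z))
    simp only [Module.finrank_fin_fun] at h2
    omega
  have hn0 : (0 : ℝ) < n := by exact_mod_cast (lt_of_lt_of_le hk hn)
  obtain ⟨i, hi⟩ : ∃ i, 1 ≤ ((n : ℝ) + 1) * w i := by
    by_contra! hcon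
    have hne : (Finset.univ : Finset ι).Nonempty := by
      rw [Finset.nonempty_iff_ne_empty]
      intro h
      rw [h] at hw1
      simp at hw1
    have h := Finset.sum_lt_sum_of_nonempty hne (fun i _ => hcon i)
    rw [← Finset.mul_sum, hw1] at h
    simp only [Finset.sum_const, Finset.card_univ, nsmul_eq_mul, mul_one] at h
    have h3 : n + 1 < Fintype.card ι := by exact_mod_cast h
    omega
  refine ⟨z i, by exact_mod_cast hz ⟨i, rfl⟩, ?_⟩
  let c : ι → ℝ := fun j => (((n : ℝ) + 1) * w j - if j = i then 1 else 0)
  have hc0 : ∀ j, 0 ≤ c j := by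
    intro j
    by_cases h : j = i
    · subst h; simp only [c, if_true]; linarith
    · simp only [c, if_neg h, sub_zero]
      exact mul_nonneg (by linarith) (hw j).le
  have hcs : ∑ j, c j = n := by
    simp only [c, Finset.sum_sub_distrib, ← Finset.mul_sum, hw1]
    simp
  have hcz : ∑ j, c j • z j = ((n : ℝ) + 1) • ∑ j, w j • z j - z i := by
    simp only [c, sub_smul, Finset.sum_sub_distrib, Finset.smul_sum, mul_smul, ite_smul]
    simp
  refine ⟨∑ j, ((n : ℝ)⁻¹ * c j) • z j, ?_, ?_⟩
  · refine (convex_convexHull ℝ _).sum_mem (fun j _ => ?_) ?_ (fun j _ => ?_)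
    · exact mul_nonneg (inv_nonneg.2 hn0.le) (hc0 j)
    · rw [← Finset.mul_sum, hcs, inv_mul_cancel₀ hn0.ne']
    · exact subset_convexHull ℝ _ (hz ⟨j, rfl⟩)
  · simp only [mul_smul, ← Finset.smul_sum, hcz]
    exact smul_inv_smul₀ hn0.ne' _

theorem step_eq {k : ℕ} (hk : 0 < k) (V : Finset (Fin k → ℝ))
    (hV : ∀ v ∈ V, ∀ i, ∃ z : ℤ, v i = (z : ℝ)) (n : ℕ) (hn : k ≤ n) :
    {a : Fin k → ℤ |
        (fun i => (a i : ℝ)) ∈ ((n + 1 : ℕ) : ℝ) • convexHull ℝ (V : Set (Fin k → ℝ))} =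
      {a : Fin k → ℤ | (fun i => (a i : ℝ)) ∈ (n : ℝ) • convexHull ℝ (V : Set (Fin k → ℝ))} +
      {a : Fin k → ℤ | (fun i => (a i : ℝ)) ∈ convexHull ℝ (V : Set (Fin k → ℝ))} := by
  ext a
  rw [Set.mem_add]
  simp only [Set.mem_setOf_eq, Nat.cast_add, Nat.cast_one]
  constructor
  · intro h
    obtain ⟨v, hv, h⟩ := step_mem hk V n hn _ h
    choose u hu using hV v hv
    refine ⟨a - u, ?_, u, ?_, by simp⟩
    · convert h using 1
      ext i
      simp [hu]
    · have : (fun i => (u i : ℝ)) = v := by ext i; simp [hu]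
      rw [this]
      exact subset_convexHull ℝ _ hv
  · rintro ⟨b, hb, c, hc, rfl⟩
    rw [(convex_convexHull ℝ _).add_smul n.cast_nonneg zero_le_one, one_smul]
    refine ⟨_, hb, _, hc, ?_⟩
    ext i
    simp

/-- geometric lemma. Let `k ∈ ℕ`, `k ≥ 1`, and let `P ⊂ ℝ^k` be a
lattice polytope (the convex hull of a nonempty finite set `V` of points with integer
coordinates). Then for every integer `n ≥ k`,
`nP ∩ ℤ^k = (n−k)*(P ∩ ℤ^k) + (kP ∩ ℤ^k)` as subsets of `(ℤ^k, +)`. -/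
theorem dilated_lattice_polytope_lattice_points_decomposition
    {k : ℕ} (hk : 0 < k) (V : Finset (Fin k → ℝ)) (hVne : V.Nonempty)
    (hV : ∀ v ∈ V, ∀ i, ∃ z : ℤ, v i = (z : ℝ)) :
    ∀ n : ℕ, k ≤ n →
      {a : Fin k → ℤ |
          (fun i => (a i : ℝ)) ∈ (n : ℝ) • convexHull ℝ (V : Set (Fin k → ℝ))} =
        iterSumset (n - k)
            {a : Fin k → ℤ | (fun i => (a i : ℝ)) ∈ convexHull ℝ (V : Set (Fin k → ℝ))} +
          {a : Fin k → ℤ |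
            (fun i => (a i : ℝ)) ∈ (k : ℝ) • convexHull ℝ (V : Set (Fin k → ℝ))} := by
  intro n hn
  induction n, hn using Nat.le_induction with
  | base => simp [iterSumset]
  | succ n hn ih =>
    rw [step_eq hk V hV n hn, ih, Nat.succ_sub hn]
    simp only [iterSumset]
    exact add_right_comm _ _ _
end
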